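/- arXiv:2310.10971 — 3 statements merged into one kernel-verified Lean document; each statement's English description precedes it below -/
import Mathlib

section
/- Let d ≥ 2 and let φ_1, …, φ_d be nonzero vectors in a real inner product space with ψ_i = φ_i/‖φ_i‖, such that no two of the vectors are antipodal (cos θ_{i,j} ≠ −1 for all i ≠ j). Suppose that for every 2-element subset {i, j} ⊆ {1, …, d} the restricted probabilities agree, p_{ψ_i}(X=i)∖S = p_{ψ_j}(X=j)∖S with S = {i, j}, and for every 3-element subset {i, j, k} the restricted probabilities p_{ψ_i}(X=i)∖S, p_{ψ_j}(X=j)∖S, p_{ψ_k}(X=k)∖S with S = {i, j, k} all agree. Then the vectors are equal norm and equiangular: ‖φ_i‖ = ‖φ_j‖ for all i, j, and cos θ_{i,j} = cos θ_{l,m} for all pairs i ≠ j and l ≠ m. -/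
/-!
With `a_i = ‖φ_i‖` and `c = cos θ_{i,j}`, agreement on `{i, j}` reads
`a_j c - a_i = a_i c - a_j`, that is `(a_j - a_i)(c + 1) = 0`, so non-antipodality gives
`a_i = a_j`. Once all norms equal `r`, the number `⟨φ_j, ψ_i⟩ = ⟨φ_i, φ_j⟩ / r` is symmetric in
`i, j` and all numerators agree, so agreement of `p_i` and `p_j` on `{i, j, k}` cancels to
`⟨φ_i, φ_k⟩ = ⟨φ_j, φ_k⟩`. Any two pairs of distinct indices are linked by replacing one index
at a time, which gives equiangularity.
-/

open scoped RealInnerProductSpace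

/-- **Equal restricted detection probabilities imply an equal-norm equiangular
configuration.** Let `φ_1, …, φ_d` (`d ≥ 2`) be nonzero vectors with no two
antipodal, `ψ_i = φ_i/‖φ_i‖`, and let
`pRes i S = exp⟨φ_i, ψ_i⟩ / ∑_{k ∈ S} exp⟨φ_k, ψ_i⟩` be the probability of
`ψ_i` detecting `φ_i` among the vectors indexed by `S`. If the restricted
probabilities agree on every 2-element subset and on every 3-element subset,
then the vectors have equal norms and are equiangular (all pairwise angle
cosines agree). -/
theorem equal_restricted_probs_imp_equal_norm_equiangular
    {E : Type*} [NormedAddCommGroup E] [InnerProductSpace ℝ E]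
    (d : ℕ) (hd : 2 ≤ d) (φ : Fin d → E)
    (hne : ∀ i, φ i ≠ 0)
    (hnotanti : ∀ i j, i ≠ j → ⟪φ i, φ j⟫ / (‖φ i‖ * ‖φ j‖) ≠ -1)
    (ψ : Fin d → E) (hψ : ∀ i, ψ i = ‖φ i‖⁻¹ • φ i)
    (pRes : Fin d → Finset (Fin d) → ℝ)
    (hpRes : ∀ i S, pRes i S =
      Real.exp ⟪φ i, ψ i⟫ / ∑ k ∈ S, Real.exp ⟪φ k, ψ i⟫)
    (h2 : ∀ i j : Fin d, i ≠ j → pRes i {i, j} = pRes j {i, j})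
    (h3 : ∀ i j k : Fin d, i ≠ j → i ≠ k → j ≠ k →
      pRes i {i, j, k} = pRes j {i, j, k} ∧
        pRes j {i, j, k} = pRes k {i, j, k}) :
    (∀ i j, ‖φ i‖ = ‖φ j‖) ∧
      (∀ i j l m : Fin d, i ≠ j → l ≠ m →
        ⟪φ i, φ j⟫ / (‖φ i‖ * ‖φ j‖) = ⟪φ l, φ m⟫ / (‖φ l‖ * ‖φ m‖)) := by
  have hpos : ∀ i, 0 < ‖φ i‖ := fun i => norm_pos_iff.mpr (hne i)
  have hG : ∀ i k, ⟪φ k, ψ i⟫ = ⟪φ k, φ i⟫ / ‖φ i‖ := by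
    intro i k
    rw [hψ, real_inner_smul_right]
    field_simp
  have hGs : ∀ i, ⟪φ i, ψ i⟫ = ‖φ i‖ := by
    intro i
    rw [hG, real_inner_self_eq_norm_sq]
    field_simp [(hpos i).ne']
  have hnorm : ∀ i j, ‖φ i‖ = ‖φ j‖ := by
    intro i j
    rcases eq_or_ne i j with rfl | hij
    · rfl
    have h := h2 i j hij
    rw [hpRes, hpRes, Finset.sum_pair hij, Finset.sum_pair hij, hGs, hGs, hG i j, hG j i,
      real_inner_comm (φ i) (φ j), div_eq_div_iff (by positivity) (by positivity)] at h
    have he : Real.exp (‖φ i‖ + ⟪φ i, φ j⟫ / ‖φ j‖)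
        = Real.exp (‖φ j‖ + ⟪φ i, φ j⟫ / ‖φ i‖) := by
      rw [Real.exp_add, Real.exp_add]
      linarith
    have he := Real.exp_injective he
    have hi := hpos i
    have hj := hpos j
    have hc : ⟪φ i, φ j⟫ + ‖φ i‖ * ‖φ j‖ ≠ 0 := by
      intro h0
      apply hnotanti i j hij
      rw [div_eq_iff (by positivity)]
      linarith
    field_simp at he
    have hprod : (‖φ i‖ - ‖φ j‖) * (⟪φ i, φ j⟫ + ‖φ i‖ * ‖φ j‖) = 0 := by
      linear_combination he
    exact sub_eq_zero.mp ((mul_eq_zero.mp hprod).resolve_right hc)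
  have hstep : ∀ k a b, a ≠ k → b ≠ k → ⟪φ a, φ k⟫ = ⟪φ b, φ k⟫ := by
    intro k a b hak hbk
    rcases eq_or_ne a b with rfl | hab
    · rfl
    have h := (h3 a b k hab hak hbk).1
    have hsum : ∀ f : Fin d → ℝ, ∑ x ∈ ({a, b, k} : Finset (Fin d)), f x = f a + (f b + f k) := by
      intro f
      rw [Finset.sum_insert (by simp [hab, hak]), Finset.sum_pair hbk]
    rw [hpRes, hpRes, hsum, hsum, hGs, hGs, hG a b, hG b a, hG a k, hG b k,
      real_inner_comm (φ a) (φ b), hnorm b a, div_eq_div_iff (by positivity) (by positivity)] at h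
    have h := mul_left_cancel₀ (Real.exp_pos _).ne' h
    have he : Real.exp (⟪φ k, φ a⟫ / ‖φ a‖) = Real.exp (⟪φ k, φ b⟫ / ‖φ a‖) := by linarith
    have he := (div_left_inj' (hpos a).ne').mp (Real.exp_injective he)
    rw [real_inner_comm, he, real_inner_comm]
  refine ⟨hnorm, fun i j l m hij hlm => ?_⟩
  have hin : ⟪φ i, φ j⟫ = ⟪φ l, φ m⟫ := by
    rcases eq_or_ne l j with rfl | hlj
    · exact (hstep l i m hij hlm.symm).trans (real_inner_comm _ _)
    · rw [hstep j i l hij hlj, real_inner_comm, hstep l j m hlj.symm hlm.symm, real_inner_comm]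
  rw [hin, hnorm i l, hnorm j m]
end

section
/- Let d ≥ 2 and let φ_1, …, φ_d be vectors in a real inner product space, all of norm r > 0 and equiangular with common pairwise inner product t (so the common cosine is c = t/r²). Then with ψ_i = φ_i/‖φ_i‖, for every i, p_{ψ_i}(X=i) = e^r / (e^r + (d−1)·e^{t/r}) ≤ e^r / (e^r + (d−1)·e^{−r/(d−1)}), with equality if and only if t = −r²/(d−1), i.e. if and only if {φ_j}_{j=1}^d is an ELMES. Thus, among equal-norm equiangular configurations of a given norm, the set of class embeddings maximizing p_{ψ_j}(X=j) for all j is necessarily an ELMES. -/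
/-!
The detection probability is `e^r / (e^r + (d-1) e^{t/r})` because `⟪φ i, ψ i⟫ = r` while every
other term of the softmax denominator has exponent `t / r`. As a function of `t` this is strictly
decreasing, so the bound and its equality case reduce to `t ≥ -r²/(d-1)`, which is
`0 ≤ ‖∑ i, φ i‖² = d (r² + (d-1) t)` (`neg_sq_div_le_of_equiangular`).
-/

open scoped RealInnerProductSpace

theorem sum_eq_add_of_eq_off {d : ℕ} (f : Fin d → ℝ) (i : Fin d) (a b : ℝ)
    (ha : f i = a) (hb : ∀ k, k ≠ i → f k = b) :
    ∑ k, f k = a + ((d : ℝ) - 1) * b := by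
  have hd : 1 ≤ d := i.pos
  rw [← Finset.add_sum_erase _ _ (Finset.mem_univ i), ha,
    Finset.sum_congr rfl (fun k hk => hb k (Finset.ne_of_mem_erase hk))]
  simp [Finset.card_erase_of_mem, Nat.cast_sub hd]

/-- This is `0 ≤ ‖∑ i, φ i‖²`, expanded into the `d` diagonal and `d (d-1)` off-diagonal inner
products. -/
theorem neg_sq_div_le_of_equiangular
    {E : Type*} [NormedAddCommGroup E] [InnerProductSpace ℝ E]
    (d : ℕ) (hd : 2 ≤ d) (φ : Fin d → E) (r t : ℝ)
    (hnorm : ∀ i, ‖φ i‖ = r) (hang : ∀ i j, i ≠ j → ⟪φ i, φ j⟫ = t) :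
    -r ^ 2 / ((d : ℝ) - 1) ≤ t := by
  have hd' : (2 : ℝ) ≤ d := by exact_mod_cast hd
  have hsum : ⟪∑ i, φ i, ∑ j, φ j⟫ = (d : ℝ) * (r ^ 2 + ((d : ℝ) - 1) * t) := by
    simp_rw [sum_inner, inner_sum]
    rw [Finset.sum_congr rfl (fun i _ => sum_eq_add_of_eq_off (fun j => ⟪φ i, φ j⟫) i (r ^ 2) t
      (by simp [hnorm]) (fun k hk => hang i k hk.symm))]
    rw [Finset.sum_const, Finset.card_univ, Fintype.card_fin, nsmul_eq_mul]
  have h0 : 0 ≤ (d : ℝ) * (r ^ 2 + ((d : ℝ) - 1) * t) := hsum ▸ real_inner_self_nonneg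
  have h1 := nonneg_of_mul_nonneg_right h0 (by linarith)
  rw [div_le_iff₀ (by linarith)]
  linarith

/-- **Among equal-norm equiangular configurations, an ELMES maximizes the
class-detection probability.** Let `φ_1, …, φ_d` (`d ≥ 2`) have common norm
`r > 0` and common pairwise inner product `t`, and set `ψ_i = φ_i/‖φ_i‖`.
Then for every `i`,
`p_{ψ_i}(X=i) = e^r / (e^r + (d−1)·e^{t/r}) ≤ e^r / (e^r + (d−1)·e^{−r/(d−1)})`,
with equality iff `t = −r²/(d−1)`, i.e. iff `{φ_j}` is an ELMES. -/
theorem elmes_maximizes_detection_prob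
    {E : Type*} [NormedAddCommGroup E] [InnerProductSpace ℝ E]
    (d : ℕ) (hd : 2 ≤ d) (φ : Fin d → E) (r t : ℝ) (hr : 0 < r)
    (hnorm : ∀ i, ‖φ i‖ = r)
    (hang : ∀ i j, i ≠ j → ⟪φ i, φ j⟫ = t)
    (ψ : Fin d → E) (hψ : ∀ i, ψ i = ‖φ i‖⁻¹ • φ i)
    (p : Fin d → ℝ)
    (hp : ∀ i, p i = Real.exp ⟪φ i, ψ i⟫ / ∑ k, Real.exp ⟪φ k, ψ i⟫) :
    (∀ i, p i = Real.exp r / (Real.exp r + ((d : ℝ) - 1) * Real.exp (t / r))) ∧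
      Real.exp r / (Real.exp r + ((d : ℝ) - 1) * Real.exp (t / r)) ≤
        Real.exp r / (Real.exp r + ((d : ℝ) - 1) * Real.exp (-r / ((d : ℝ) - 1))) ∧
      (Real.exp r / (Real.exp r + ((d : ℝ) - 1) * Real.exp (t / r)) =
          Real.exp r / (Real.exp r + ((d : ℝ) - 1) * Real.exp (-r / ((d : ℝ) - 1))) ↔
        t = -r ^ 2 / ((d : ℝ) - 1)) := by
  have hd' : (0 : ℝ) < (d : ℝ) - 1 := by
    have : (2 : ℝ) ≤ d := by exact_mod_cast hd
    linarith
  have ht := neg_sq_div_le_of_equiangular d hd φ r t hnorm hang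
  have hrw : -r / ((d : ℝ) - 1) = (-r ^ 2 / ((d : ℝ) - 1)) / r := by
    field_simp
  have hle : Real.exp (-r / ((d : ℝ) - 1)) ≤ Real.exp (t / r) := by
    rw [hrw]
    gcongr
  refine ⟨fun i => ?_, ?_, ?_⟩
  · have hii : ⟪φ i, ψ i⟫ = r := by
      rw [hψ, inner_smul_right, real_inner_self_eq_norm_sq, hnorm]
      field_simp
    have hki : ∀ k, k ≠ i → Real.exp ⟪φ k, ψ i⟫ = Real.exp (t / r) := by
      intro k hk
      rw [hψ, inner_smul_right, hang k i hk, hnorm, inv_mul_eq_div]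
    rw [hp, sum_eq_add_of_eq_off (fun k => Real.exp ⟪φ k, ψ i⟫) i _ _ (by rw [hii]) hki, hii]
  · gcongr
  · constructor
    · intro h
      rw [div_eq_div_iff (by positivity) (by positivity)] at h
      have h1 := mul_left_cancel₀ (Real.exp_pos r).ne' h
      have h2 := mul_left_cancel₀ hd'.ne' (add_left_cancel h1)
      have h3 := Real.exp_injective h2
      rw [hrw] at h3
      exact ((div_left_inj' hr.ne').1 h3).symm
    · intro h
      rw [hrw, h]
end

section
/- Let d ≥ 2 and r > 0. For c ∈ [−1, 1] define the probability distribution p(c) on {1, …, d} by p(c)_1 = e^r / Z(c) and p(c)_k = e^{r c} / Z(c) for 2 ≤ k ≤ d, where Z(c) = e^r + (d−1)·e^{r c}, and let H(p(c)) = −Σ_{k=1}^d p(c)_k · ln p(c)_k be its Shannon entropy. Then H(p(c)) is strictly increasing in c on [−1, 1); in particular, for all c with −1/(d−1) < c ≤ 1, H(p(−1/(d−1))) < H(p(c)). Consequently, among equal-norm (norm r) equiangular class embeddings, an ELMES minimizes the entropy H_{ψ_i}(X) of the class-detection distribution. -/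
/-!
Collecting the `d - 1` equal terms and using `log (e^a / Z) = a - log Z`, the entropy becomes
`H c = log Z - (r e^r + (d - 1) r c e^{rc}) / Z` with `Z = e^r + (d - 1) e^{rc}`
(`entropy_closed_form`). Its derivative simplifies to
`(d - 1) r² (1 - c) e^{rc} e^r / Z²` (`hasDerivAt_closedForm`), which is positive for `c < 1`.
Hence `H` is strictly increasing on all of `(-∞, 1]`, including the endpoint `1` by continuity,
and both claims are restrictions of this fact.
-/

/-- The entropy of a distribution on `n + 1` points with one weight `e^r / Z` and `n` weights
`e^{rc} / Z`, in closed form as a function of `c`; the number `n` of equal weights is a real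
parameter. -/
noncomputable def closedForm (n r c : ℝ) : ℝ :=
  Real.log (Real.exp r + n * Real.exp (r * c)) -
    (r * Real.exp r + n * (r * c * Real.exp (r * c))) / (Real.exp r + n * Real.exp (r * c))

lemma hasDerivAt_closedForm {n : ℝ} (hn : 0 < n) (r c : ℝ) :
    HasDerivAt (closedForm n r)
      (n * r ^ 2 * (1 - c) * Real.exp (r * c) * Real.exp r /
        (Real.exp r + n * Real.exp (r * c)) ^ 2) c := by
  have hZ : Real.exp r + n * Real.exp (r * c) ≠ 0 := by positivity
  have hlin : HasDerivAt (fun x : ℝ => r * x) r c := by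
    simpa using (hasDerivAt_id c).const_mul r
  have hZ' := (hlin.exp.const_mul n).const_add (Real.exp r)
  have hN' := ((hlin.mul hlin.exp).const_mul n).const_add (r * Real.exp r)
  refine ((hZ'.log hZ).sub (hN'.div hZ' hZ)).congr_deriv ?_
  simp only [Pi.mul_apply]
  field_simp
  ring

lemma strictMonoOn_closedForm {n r : ℝ} (hn : 0 < n) (hr : 0 < r) :
    StrictMonoOn (closedForm n r) (Set.Iic 1) := by
  refine strictMonoOn_of_deriv_pos (convex_Iic 1)
    (fun c _ => (hasDerivAt_closedForm hn r c).continuousAt.continuousWithinAt) ?_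
  intro c hc
  rw [interior_Iic, Set.mem_Iio] at hc
  rw [(hasDerivAt_closedForm hn r c).deriv]
  have : 0 < 1 - c := sub_pos.2 hc
  positivity

lemma entropy_closed_form (n : ℕ) (r c : ℝ) (Z : ℝ)
    (hZ : Z = Real.exp r + (n : ℝ) * Real.exp (r * c)) (q : Fin (n + 1) → ℝ)
    (hq : ∀ k, q k = if (k : ℕ) = 0 then Real.exp r / Z else Real.exp (r * c) / Z) :
    -∑ k, q k * Real.log (q k) = closedForm n r c := by
  have hZ0 : Z ≠ 0 := by rw [hZ]; positivity
  rw [Fin.sum_univ_succ]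
  simp only [hq, Fin.val_zero, Fin.val_succ, if_true, Nat.succ_ne_zero, if_false,
    Finset.sum_const, Finset.card_univ, Fintype.card_fin, nsmul_eq_mul]
  rw [Real.log_div (Real.exp_ne_zero _) hZ0, Real.log_div (Real.exp_ne_zero _) hZ0,
    Real.log_exp, Real.log_exp, closedForm, ← hZ]
  field_simp
  -- The coefficients of `log Z` sum to `Z`.
  linear_combination (-Real.log Z) * hZ

/-- **An ELMES minimizes the entropy of the class-detection distribution.**
For `d ≥ 2`, `r > 0` and `c ∈ [−1, 1]`, let `p(c)` be the distribution on
`{1, …, d}` with `p(c)_1 = e^r / Z(c)` and `p(c)_k = e^{r c} / Z(c)` otherwise,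
where `Z(c) = e^r + (d−1)·e^{r c}`, and let `H(p(c))` be its Shannon entropy.
Then `H(p(c))` is strictly increasing in `c` on `[−1, 1)`, and for every `c`
with `−1/(d−1) < c ≤ 1` we have `H(p(−1/(d−1))) < H(p(c))`; hence the ELMES
cosine `−1/(d−1)` minimizes the entropy among equiangular equal-norm
configurations. -/
theorem elmes_minimizes_entropy (d : ℕ) (hd : 2 ≤ d) (r : ℝ) (hr : 0 < r)
    (Z : ℝ → ℝ) (hZ : ∀ c, Z c = Real.exp r + ((d : ℝ) - 1) * Real.exp (r * c))
    (p : ℝ → Fin d → ℝ)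
    (hp : ∀ c k, p c k =
      if (k : ℕ) = 0 then Real.exp r / Z c else Real.exp (r * c) / Z c)
    (H : ℝ → ℝ)
    (hH : ∀ c, H c = -∑ k, p c k * Real.log (p c k)) :
    StrictMonoOn H (Set.Ico (-1 : ℝ) 1) ∧
      ∀ c : ℝ, -1 / ((d : ℝ) - 1) < c → c ≤ 1 →
        H (-1 / ((d : ℝ) - 1)) < H c := by
  obtain ⟨n, rfl⟩ : ∃ n, d = n + 1 := ⟨d - 1, by omega⟩
  have hn : (0 : ℝ) < n := by exact_mod_cast (by omega : 0 < n)
  have hcast : ((n + 1 : ℕ) : ℝ) - 1 = n := by push_cast; ring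
  rw [hcast]
  have hHc : H = closedForm n r := by
    funext c
    rw [hH c]
    exact entropy_closed_form n r c (Z c) (by rw [hZ c, hcast]) (p c) (hp c)
  have hmono := strictMonoOn_closedForm hn hr
  rw [hHc]
  exact ⟨hmono.mono fun c hc => hc.2.le, fun c hc hc1 => hmono (hc.le.trans hc1) hc1 hc⟩
end
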